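/- Let n be a positive integer and let α ≥ 0 be a real number (for the induced ensemble obtained from an M×2n real Gaussian matrix, α = (M−2n)/2). For G drawn from the induced real Ginibre ensemble of size 2n with parameter α, and for every complex number z, ⟨det(z·I − G)⟩ = z^{2n}. -/

import Mathlib

open MeasureTheory Matrix

/-- The (unnormalized) density of the induced real Ginibre ensemble of size `N`
with parameter `α`: `det(G Gᵀ)^α exp(-Tr(G Gᵀ)/2)`. -/
noncomputable def inducedRealGinibreWeight (N : ℕ) (α : ℝ) (g : Fin N → Fin N → ℝ) : ℝ :=
  (Matrix.of g * (Matrix.of g)ᵀ).det ^ α *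
    Real.exp (-(Matrix.of g * (Matrix.of g)ᵀ).trace / 2)

/-!
The weight does not change when `G` is multiplied on the left by an orthogonal matrix, in
particular when the signs of its rows are changed. Averaging `det (B - G)` over all choices of row
signs gives `det B`, because the determinant is multilinear in the rows and the average of the
`i`-th row over its sign is the `i`-th row of `B`. The integrals converge because the weight is at
most a power of `‖G‖` times a Gaussian, while `det (B - G)` grows polynomially.
-/

theorem sum_map_add_intUnits_smul {ι R N : Type*} {M : ι → Type*} [Fintype ι] [DecidableEq ι]
    [CommSemiring R] [∀ i, AddCommGroup (M i)] [∀ i, Module R (M i)] [AddCommMonoid N] [Module R N]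
    (f : MultilinearMap R M N) (a b : ∀ i, M i) :
    ∑ s : ι → ℤˣ, f (fun i => b i + s i • a i) = (2 : R) ^ Fintype.card ι • f b := by
  have hrow (i : ι) : ∑ u : ℤˣ, (b i + u • a i) = (2 : R) • b i := by
    simp [Finset.sum_add_distrib, UnitsInt.univ, two_smul]
  rw [← f.map_sum fun i (u : ℤˣ) => b i + u • a i]
  simp only [hrow, f.map_smul_univ, Finset.prod_const, Finset.card_univ]

theorem sum_det_add_intUnits_smul {ι R : Type*} [Fintype ι] [DecidableEq ι] [CommRing R]
    (A B : Matrix ι ι R) :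
    ∑ s : ι → ℤˣ, (B + of fun i => s i • A i).det = 2 ^ Fintype.card ι * B.det :=
  sum_map_add_intUnits_smul (detRowAlternating (n := ι) (R := R)).toMultilinearMap A B

theorem measurePreserving_intUnits_smul {G : Type*} [MeasurableSpace G] [AddCommGroup G]
    [MeasurableNeg G] (μ : Measure G) [μ.IsNegInvariant] (u : ℤˣ) :
    MeasurePreserving (u • · : G → G) μ μ := by
  rcases Int.units_eq_one_or u with rfl | rfl
  · simp only [one_smul]
    exact .id μ
  · simpa only [Units.neg_smul, one_smul] using Measure.measurePreserving_neg μ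

theorem integral_mul_det_sub_of_intUnits_smul_invariant {ι 𝕜 : Type*} [Fintype ι] [DecidableEq ι]
    [RCLike 𝕜] {μ : Measure (ι → ι → ℝ)} {w : (ι → ι → ℝ) → 𝕜} {B : Matrix ι ι 𝕜}
    (hμ : ∀ s : ι → ℤˣ, MeasurePreserving (fun g i => s i • g i) μ μ)
    (hw : ∀ (s : ι → ℤˣ) g, w (fun i => s i • g i) = w g)
    (hint : Integrable (fun g => w g * (B - (of g).map ((↑) : ℝ → 𝕜)).det) μ) :
    ∫ g, w g * (B - (of g).map ((↑) : ℝ → 𝕜)).det ∂μ = (∫ g, w g ∂μ) * B.det := by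
  set F : (ι → ι → ℝ) → 𝕜 := fun g => w g * (B - (of g).map ((↑) : ℝ → 𝕜)).det with hF
  have hcomp (s : ι → ℤˣ) : ∫ g, F (fun i => s i • g i) ∂μ = ∫ g, F g ∂μ := by
    conv_rhs => rw [← (hμ s).map_eq]
    exact (integral_map (hμ s).aemeasurable ((hμ s).map_eq.symm ▸ hint.1)).symm
  have hsum (g : ι → ι → ℝ) :
      ∑ s : ι → ℤˣ, F (fun i => s i • g i) = w g * (2 ^ Fintype.card ι * B.det) := by
    rw [← sum_det_add_intUnits_smul (-(of g).map ((↑) : ℝ → 𝕜)) B, Finset.mul_sum]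
    refine Finset.sum_congr rfl fun s _ => ?_
    simp only [hF, hw]
    congr 3
    ext i j
    simp [Units.smul_def, sub_eq_add_neg]
  refine mul_left_cancel₀ (pow_ne_zero (Fintype.card ι) (two_ne_zero (α := 𝕜))) ?_
  calc 2 ^ Fintype.card ι * ∫ g, F g ∂μ
      = ∑ s : ι → ℤˣ, ∫ g, F (fun i => s i • g i) ∂μ := by
        simp [hcomp]
    _ = ∫ g, ∑ s : ι → ℤˣ, F (fun i => s i • g i) ∂μ :=
        (integral_finsetSum _ fun s _ => (hμ s).integrable_comp_of_integrable hint).symm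
    _ = 2 ^ Fintype.card ι * ((∫ g, w g ∂μ) * B.det) := by
        simp only [hsum, integral_mul_const]
        ring

section Growth

open Filter Asymptotics

theorem integrable_of_isBigO_rpow_mul_exp_neg_mul_sq {E F : Type*} [NormedAddCommGroup E]
    [NormedSpace ℝ E] [FiniteDimensional ℝ E] [MeasurableSpace E] [BorelSpace E]
    {μ : Measure E} [μ.IsAddHaarMeasure] [NormedAddCommGroup F] {f : E → F}
    (hf : LocallyIntegrable f μ) {b s : ℝ} (hb : 0 < b)
    (hfO : f =O[cocompact E] fun x => ‖x‖ ^ s * Real.exp (-b * ‖x‖ ^ 2)) :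
    Integrable f μ := by
  have hproper : ProperSpace E := FiniteDimensional.proper_real E
  set r : ℝ := Module.finrank ℝ E + 1
  have hexp : (fun t : ℝ => t ^ s * Real.exp (-b * t ^ 2)) =O[atTop] fun t => (1 + t) ^ (-r) := by
    have hlin : (fun t : ℝ => Real.exp (-(1 / 2) * (1 + t))) =o[atTop] fun t => (1 + t) ^ (-r) :=
      (isLittleO_exp_neg_mul_rpow_atTop one_half_pos (-r)).comp_tendsto
        (tendsto_atTop_add_const_left _ 1 tendsto_id)
    refine (rpow_mul_exp_neg_mul_sq_isLittleO_exp_neg hb s).isBigO.trans (.trans ?_ hlin.isBigO)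
    simp only [mul_add, Real.exp_add]
    exact isBigO_self_const_mul (Real.exp_ne_zero _) _ _
  exact hf.integrable_of_isBigO_cocompact
    (hfO.trans (hexp.comp_tendsto tendsto_norm_cocompact_atTop))
    ((integrable_one_add_norm (lt_add_one _)).integrableAtFilter _)

theorem isBigO_det {α ι R : Type*} [Fintype ι] [DecidableEq ι] [SeminormedCommRing R] {l : Filter α}
    {A : α → Matrix ι ι R} {f : α → ℝ} (hA : ∀ i j, (fun x => A x i j) =O[l] f) :
    (fun x => (A x).det) =O[l] fun x => f x ^ Fintype.card ι := by
  simp only [det_apply, Units.smul_def, ← Int.cast_smul_eq_zsmul R, smul_eq_mul]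
  refine .fun_sum fun σ _ => .const_mul_left ?_ _
  simpa using! IsBigO.finsetProd (s := Finset.univ) fun i _ => hA (σ i) i

theorem norm_apply_le_pi_pi_norm {ι κ E : Type*} [Fintype ι] [Fintype κ] [SeminormedAddGroup E]
    (A : ι → κ → E) (i : ι) (j : κ) : ‖A i j‖ ≤ ‖A‖ :=
  (norm_le_pi_norm (A i) j).trans (norm_le_pi_norm A i)

theorem isBigO_det_const_sub_cocompact {ι 𝕜 : Type*} [Fintype ι] [DecidableEq ι] [RCLike 𝕜]
    (B : Matrix ι ι 𝕜) :
    (fun g : ι → ι → ℝ => (B - (of g).map ((↑) : ℝ → 𝕜)).det) =O[cocompact _]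
      fun g => ‖g‖ ^ Fintype.card ι := by
  refine isBigO_det fun i j => .sub ?_ ?_
  · have hnorm : Tendsto (fun g : ι → ι → ℝ => ‖‖g‖‖) (cocompact _) atTop := by
      simpa only [norm_norm] using tendsto_norm_cocompact_atTop
    exact (isLittleO_const_left.2 (.inr hnorm)).isBigO
  · exact .of_norm_le fun g => by simpa using norm_apply_le_pi_pi_norm g i j

theorem sq_norm_le_trace_mul_transpose {ι κ : Type*} [Fintype ι] [Fintype κ] (A : ι → κ → ℝ) :
    ‖A‖ ^ 2 ≤ (of A * (of A)ᵀ).trace := by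
  have htrace : (of A * (of A)ᵀ).trace = ∑ i, ∑ j, A i j ^ 2 := by
    simp [trace, mul_apply, sq]
  have hnonneg : 0 ≤ (of A * (of A)ᵀ).trace := htrace ▸ by positivity
  have hentry (i : ι) (j : κ) : A i j ^ 2 ≤ (of A * (of A)ᵀ).trace := by
    rw [htrace, ← Fintype.sum_prod_type' fun i j => A i j ^ 2]
    exact Finset.single_le_sum (f := fun p : ι × κ => A p.1 p.2 ^ 2) (fun _ _ => sq_nonneg _)
      (Finset.mem_univ (i, j))
  rw [← Real.le_sqrt (norm_nonneg A) hnonneg, pi_norm_le_iff_of_nonneg (Real.sqrt_nonneg _)]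
  intro i
  rw [pi_norm_le_iff_of_nonneg (Real.sqrt_nonneg _)]
  exact fun j => Real.abs_le_sqrt (hentry i j)

end Growth

namespace inducedRealGinibreWeight

open Filter Asymptotics

variable {N : ℕ} {α : ℝ}

theorem nonneg (g : Fin N → Fin N → ℝ) : 0 ≤ inducedRealGinibreWeight N α g := by
  have hpsd : (of g * (of g)ᵀ).PosSemidef := by
    simpa using posSemidef_self_mul_conjTranspose (of g)
  exact mul_nonneg (Real.rpow_nonneg hpsd.det_nonneg _) (Real.exp_nonneg _)

theorem orthogonal_mul {O : Matrix (Fin N) (Fin N) ℝ} (hO : O ∈ orthogonalGroup (Fin N) ℝ)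
    (A : Matrix (Fin N) (Fin N) ℝ) :
    inducedRealGinibreWeight N α (O * A) = inducedRealGinibreWeight N α A := by
  have hOO : Oᵀ * O = 1 := (mem_orthogonalGroup_iff' _ _).1 hO
  have hgram : O * A * (O * A)ᵀ = O * (A * Aᵀ) * Oᵀ := by
    simp only [transpose_mul, Matrix.mul_assoc]
  change (O * A * (O * A)ᵀ).det ^ α * Real.exp (-(O * A * (O * A)ᵀ).trace / 2) =
    (A * Aᵀ).det ^ α * Real.exp (-(A * Aᵀ).trace / 2)
  rw [hgram, det_mul_comm, trace_mul_comm, ← Matrix.mul_assoc, hOO, Matrix.one_mul]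

theorem intUnits_smul (s : Fin N → ℤˣ) (g : Fin N → Fin N → ℝ) :
    inducedRealGinibreWeight N α (fun i => s i • g i) = inducedRealGinibreWeight N α g := by
  let D : Matrix (Fin N) (Fin N) ℝ := diagonal fun i => ((s i : ℤ) : ℝ)
  have hD : D ∈ orthogonalGroup (Fin N) ℝ := by
    rw [mem_orthogonalGroup_iff, diagonal_transpose, diagonal_mul_diagonal, ← diagonal_one]
    congr 1 with i
    rcases Int.units_eq_one_or (s i) with h | h <;> simp [h]
  have hDg : (fun i => s i • g i) = D * of g := by
    ext i j
    simp [D, Units.smul_def]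
  rw [hDg]
  exact orthogonal_mul hD (of g)

theorem continuous (hα : 0 ≤ α) : Continuous (inducedRealGinibreWeight N α) := by
  have hgram : Continuous fun g : Fin N → Fin N → ℝ => of g * (of g)ᵀ :=
    continuous_id.matrix_mul continuous_id.matrix_transpose
  exact (hgram.matrix_det.rpow_const fun _ => Or.inr hα).mul
    (hgram.matrix_trace.neg.div_const 2).rexp

theorem isBigO_cocompact (hα : 0 ≤ α) :
    inducedRealGinibreWeight N α =O[cocompact _]
      fun g => ‖g‖ ^ (2 * N * α) * Real.exp (-(1 / 2) * ‖g‖ ^ 2) := by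
  have hdet : (fun g : Fin N → Fin N → ℝ => (of g).det) =O[cocompact _] fun g => ‖g‖ ^ N := by
    simpa using isBigO_det (A := fun g : Fin N → Fin N → ℝ => of g) fun i j =>
      .of_norm_le fun g => norm_apply_le_pi_pi_norm g i j
  have hpow : (fun g : Fin N → Fin N → ℝ => (of g * (of g)ᵀ).det ^ α) =O[cocompact _]
      fun g => ‖g‖ ^ (2 * N * α) := by
    refine ((hdet.mul hdet).rpow hα (.of_forall fun g => by positivity)).congr (fun g => ?_)
      fun g => ?_
    · rw [det_mul, det_transpose]
    · rw [← pow_add, ← two_mul, ← Real.rpow_natCast_mul (norm_nonneg g)]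
      push_cast
      rfl
  refine hpow.mul (.of_norm_le fun g => ?_)
  rw [Real.norm_of_nonneg (Real.exp_nonneg _), Real.exp_le_exp]
  linarith [sq_norm_le_trace_mul_transpose g]

theorem integrable_smul_of_isBigO {E : Type*} [NormedAddCommGroup E] [NormedSpace ℝ E]
    (hα : 0 ≤ α) {p : (Fin N → Fin N → ℝ) → E} (hp : Continuous p) {m : ℕ}
    (hpO : p =O[cocompact _] fun g => ‖g‖ ^ m) :
    Integrable fun g => inducedRealGinibreWeight N α g • p g := by
  refine integrable_of_isBigO_rpow_mul_exp_neg_mul_sq (s := 2 * N * α + m)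
    ((continuous hα).smul hp).locallyIntegrable one_half_pos ?_
  refine ((isBigO_cocompact hα).smul hpO).congr_right fun g => ?_
  rw [Real.rpow_add_of_nonneg (norm_nonneg g) (by positivity) (by positivity), Real.rpow_natCast,
    smul_eq_mul]
  ring

theorem integrable (hα : 0 ≤ α) : Integrable (inducedRealGinibreWeight N α) := by
  have hone : (fun _ : Fin N → Fin N → ℝ => (1 : ℝ)) =O[cocompact _] fun g => ‖g‖ ^ 0 := by
    simpa only [pow_zero] using isBigO_refl _ _
  simpa only [smul_eq_mul, mul_one] using integrable_smul_of_isBigO hα continuous_const hone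

theorem integral_pos (hα : 0 ≤ α) : 0 < ∫ g, inducedRealGinibreWeight N α g := by
  have hone : inducedRealGinibreWeight N α (1 : Matrix (Fin N) (Fin N) ℝ) ≠ 0 := by
    have of_one : of (1 : Matrix (Fin N) (Fin N) ℝ) = 1 := rfl
    simp [inducedRealGinibreWeight, of_one, Real.exp_ne_zero]
  exact integral_pos_of_integrable_nonneg_nonzero (continuous hα) (integrable hα) nonneg hone

theorem integrable_mul_det_sub (hα : 0 ≤ α) (B : Matrix (Fin N) (Fin N) ℂ) :
    Integrable fun g => (inducedRealGinibreWeight N α g : ℂ) *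
      (B - (of g).map ((↑) : ℝ → ℂ)).det := by
  have hcont : Continuous fun g : Fin N → Fin N → ℝ => (B - (of g).map ((↑) : ℝ → ℂ)).det :=
    (continuous_const.sub (continuous_id.matrix_map Complex.continuous_ofReal)).matrix_det
  simpa only [Complex.real_smul] using
    integrable_smul_of_isBigO hα hcont (isBigO_det_const_sub_cocompact B)

end inducedRealGinibreWeight

theorem inducedRealGinibre_even_skew_orthogonal_poly_general (N : ℕ) {α : ℝ} (hα : 0 ≤ α)
    (B : Matrix (Fin N) (Fin N) ℂ) :
    (∫ g : Fin N → Fin N → ℝ, (inducedRealGinibreWeight N α g : ℂ) *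
        (B - (Matrix.of g).map ((↑) : ℝ → ℂ)).det) /
      ((∫ g : Fin N → Fin N → ℝ, inducedRealGinibreWeight N α g : ℝ) : ℂ) = B.det := by
  have hZ : ((∫ g, inducedRealGinibreWeight N α g : ℝ) : ℂ) ≠ 0 :=
    Complex.ofReal_ne_zero.2 (inducedRealGinibreWeight.integral_pos hα).ne'
  rw [div_eq_iff hZ, mul_comm B.det, ← integral_complex_ofReal]
  exact integral_mul_det_sub_of_intUnits_smul_invariant
    (fun s => volume_preserving_pi fun i => measurePreserving_intUnits_smul volume (s i))
    (fun s g => congrArg _ (inducedRealGinibreWeight.intUnits_smul s g))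
    (inducedRealGinibreWeight.integrable_mul_det_sub hα B)

/-- The even-degree skew orthogonal polynomial for the induced real Ginibre ensemble:
`⟨det (z I - G)⟩ = z^(2n)`, where `⟨·⟩` is the normalized average against the density
`det(G Gᵀ)^α exp(-Tr(G Gᵀ)/2)` with respect to Lebesgue measure on the entries. -/
theorem inducedRealGinibre_even_skew_orthogonal_poly (n : ℕ) (hn : 0 < n)
    (α : ℝ) (hα : 0 ≤ α) (z : ℂ) :
    (∫ g : Fin (2 * n) → Fin (2 * n) → ℝ,
        (inducedRealGinibreWeight (2 * n) α g : ℂ) *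
          (z • (1 : Matrix (Fin (2 * n)) (Fin (2 * n)) ℂ)
            - (Matrix.of g).map ((↑) : ℝ → ℂ)).det) /
      ((∫ g : Fin (2 * n) → Fin (2 * n) → ℝ, inducedRealGinibreWeight (2 * n) α g : ℝ) : ℂ)
      = z ^ (2 * n) :=
  (inducedRealGinibre_even_skew_orthogonal_poly_general (2 * n) hα (z • 1)).trans (by simp)
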